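/- Let a, b, c be real numbers with c > a > 0, and let x ∈ (0,1). Then sgn(D_a (F(a,b,c,x) / F(a,b,c+1,x))) = sgn(b), where D_a denotes the derivative with respect to the parameter a of the ratio of the two hypergeometric functions. -/

import Mathlib

/-- The rising factorial (Pochhammer symbol): `(y)_j = y(y+1)⋯(y+j-1)`, `(y)_0 = 1`. -/
noncomputable def risingFactorial (y : ℝ) : ℕ → ℝ
  | 0 => 1
  | m + 1 => risingFactorial y m * (y + m)

/-- The Gaussian hypergeometric function
`F(a,b,c,x) = ∑_{j≥0} (a)_j (b)_j / ((c)_j j!) xʲ`. -/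
noncomputable def hypF (a b c x : ℝ) : ℝ :=
  ∑' j : ℕ, risingFactorial a j * risingFactorial b j /
    (risingFactorial c j * (Nat.factorial j : ℝ)) * x ^ j

/-!
Euler's integral writes `F(a,b,c+1,x)` as the integral of `(1 - x t) ^ (-b)` against the beta
distribution with parameters `a` and `c + 1 - a`. Combined with the contiguous relation
`F(a,b,c,x) = F(a,b,c+1,x) + a b x / (c (c + 1)) F(a+1,b+1,c+2,x)`, it gives
`F(a,b,c,x) / F(a,b,c+1,x) = 1 + (b x / c) E_a[t / (1 - x t)]`, where `E_a` is the expectation for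
the normalised Euler integrand. As `a` varies, these probability measures form an exponential family
with sufficient statistic `log (t / (1 - t))`, so the `a`-derivative of `E_a[t / (1 - x t)]` is the
covariance of `t / (1 - x t)` and `log (t / (1 - t))`. Both functions are strictly increasing on
`(0, 1)`, so Chebyshev's association inequality makes this covariance positive.
-/

open MeasureTheory ProbabilityTheory Set

lemma integral_pos_of_ae_pos {α : Type*} [MeasurableSpace α] {μ : Measure α} [NeZero μ]
    {f : α → ℝ} (hf : Integrable f μ) (hpos : ∀ᵐ t ∂μ, 0 < f t) : 0 < ∫ t, f t ∂μ := by
  rw [integral_pos_iff_support_of_nonneg_ae (hpos.mono fun _ ↦ le_of_lt) hf,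
    measure_eq_measure_of_null_sdiff (subset_univ _) ?_]
  · exact Measure.measure_univ_pos.2 (NeZero.ne μ)
  · exact measure_mono_null (fun t ht ↦ by simp_all) hpos

section Covariance

variable {α : Type*} [MeasurableSpace α] {μ : Measure α} [IsProbabilityMeasure μ] {f g : α → ℝ}

lemma integrable_sub_mul_sub (hf : MemLp f 2 μ) (hg : MemLp g 2 μ) (u v : ℝ) :
    Integrable (fun t ↦ (u - f t) * (v - g t)) μ :=
  ((memLp_const u).sub hf).integrable_mul ((memLp_const v).sub hg)

lemma integral_sub_mul_sub (hf : MemLp f 2 μ) (hg : MemLp g 2 μ) (u v : ℝ) :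
    ∫ t, (u - f t) * (v - g t) ∂μ = (μ[f] - u) * (μ[g] - v) + cov[f, g; μ] := by
  have f_int : Integrable f μ := hf.integrable one_le_two
  have g_int : Integrable g μ := hg.integrable one_le_two
  have fg_int : Integrable (fun t ↦ f t * g t) μ := hf.integrable_mul hg
  have expand (t : α) : (u - f t) * (v - g t) = f t * g t - v * f t - u * g t + u * v := by ring
  simp_rw [expand, covariance_eq_sub hf hg]
  rw [integral_add (by fun_prop) (by fun_prop), integral_sub (by fun_prop) (by fun_prop),
    integral_sub fg_int (by fun_prop), integral_const_mul, integral_const_mul]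
  simp only [integral_const, probReal_univ, smul_eq_mul, one_mul, Pi.mul_apply]
  ring

lemma integrable_integral_sub_mul_sub (hf : MemLp f 2 μ) (hg : MemLp g 2 μ) :
    Integrable (fun u ↦ ∫ t, (f u - f t) * (g u - g t) ∂μ) μ := by
  simp_rw [integral_sub_mul_sub hf hg]
  exact (integrable_sub_mul_sub hf hg _ _).add (integrable_const _)

lemma integral_integral_sub_mul_sub (hf : MemLp f 2 μ) (hg : MemLp g 2 μ) :
    ∫ u, ∫ t, (f u - f t) * (g u - g t) ∂μ ∂μ = 2 * cov[f, g; μ] := by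
  simp_rw [integral_sub_mul_sub hf hg]
  rw [integral_add (integrable_sub_mul_sub hf hg _ _) (integrable_const _),
    integral_sub_mul_sub hf hg]
  simp only [sub_self, mul_zero, zero_add, integral_const, probReal_univ, smul_eq_mul, one_mul]
  ring

theorem covariance_pos_of_strictMonoOn [LinearOrder α] [NullSingletonClass μ] {s : Set α}
    (hs : ∀ᵐ t ∂μ, t ∈ s) (hf : StrictMonoOn f s) (hg : StrictMonoOn g s)
    (hf2 : MemLp f 2 μ) (hg2 : MemLp g 2 μ) : 0 < cov[f, g; μ] := by
  suffices 0 < ∫ u, ∫ t, (f u - f t) * (g u - g t) ∂μ ∂μ by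
    rw [integral_integral_sub_mul_sub hf2 hg2] at this
    linarith
  refine integral_pos_of_ae_pos (integrable_integral_sub_mul_sub hf2 hg2) ?_
  filter_upwards [hs] with u hu
  refine integral_pos_of_ae_pos (integrable_sub_mul_sub hf2 hg2 _ _) ?_
  filter_upwards [hs, compl_mem_ae_iff.2 (measure_singleton u)] with t ht htu
  rcases lt_or_gt_of_ne htu with htu | hut
  · exact mul_pos (sub_pos.2 (hf ht hu htu)) (sub_pos.2 (hg ht hu htu))
  · exact mul_pos_of_neg_of_neg (sub_neg.2 (hf hu ht hut)) (sub_neg.2 (hg hu ht hut))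

end Covariance

section ExponentialFamily

variable {Ω : Type*} [MeasurableSpace Ω] {μ : Measure Ω} {X g : Ω → ℝ} {t C : ℝ}

lemma hasDerivAt_integral_mul_exp (ht : t ∈ interior (integrableExpSet X μ))
    (hg : AEStronglyMeasurable g μ) (hgC : ∀ᵐ ω ∂μ, |g ω| ≤ C) :
    HasDerivAt (fun s ↦ ∫ ω, g ω * Real.exp (s * X ω) ∂μ)
      (∫ ω, g ω * (X ω * Real.exp (t * X ω)) ∂μ) t := by
  have hX : AEMeasurable X μ := aemeasurable_of_mem_interior_integrableExpSet ht
  obtain ⟨l, u, htlu, hlu⟩ := mem_nhds_iff_exists_Ioo_subset.1 (mem_interior_iff_mem_nhds.1 ht)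
  set r := ((t - l) ⊓ (u - t)) / 2
  have hr : 0 < r := half_pos (lt_inf_iff.2 ⟨sub_pos.2 htlu.1, sub_pos.2 htlu.2⟩)
  refine (hasDerivAt_integral_of_dominated_loc_of_deriv_le
    (bound := fun ω ↦ C * (|X ω| ^ 1 * Real.exp (t * X ω + r / 2 * |X ω|)))
    (F' := fun s ω ↦ g ω * (X ω * Real.exp (s * X ω)))
    (Metric.ball_mem_nhds t (half_pos hr)) (.of_forall fun s ↦ by fun_prop) ?_ (by fun_prop)
    ?_ ?_ (.of_forall fun ω s _ ↦ ?_)).2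
  · exact (integrable_of_mem_integrableExpSet (interior_subset ht)).bdd_mul hg hgC
  · filter_upwards [hgC] with ω hω s hs
    have exponent_le : s * X ω ≤ t * X ω + r / 2 * |X ω| := by
      have : (s - t) * X ω ≤ r / 2 * |X ω| := (le_abs_self _).trans <| by
        rw [abs_mul]
        gcongr
        exact (Metric.mem_ball.1 hs).le
      linarith
    rw [norm_mul, norm_mul, Real.norm_of_nonneg (Real.exp_nonneg _), pow_one]
    exact mul_le_mul hω (by gcongr; rfl) (by positivity) ((abs_nonneg _).trans hω)
  · exact (integrable_pow_abs_mul_exp_add_of_integrable_exp_mul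
      (hlu (add_half_inf_sub_mem_Ioo htlu)) (hlu (sub_half_inf_sub_mem_Ioo htlu)) (by positivity)
      ((half_lt_self hr).trans_le (le_abs_self _)) 1).const_mul C
  · simpa [mul_comm] using (((hasDerivAt_id s).mul_const (X ω)).exp).const_mul (g ω)

lemma integral_tilted_mul_eq_div (g : Ω → ℝ) (s : ℝ) :
    ∫ ω, g ω ∂μ.tilted (s * X ·) = (∫ ω, g ω * Real.exp (s * X ω) ∂μ) / mgf X μ s := by
  rw [integral_tilted_mul_eq_mgf, ← integral_div]
  simp only [smul_eq_mul]
  congr with ω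
  ring

theorem hasDerivAt_integral_tilted (ht : t ∈ interior (integrableExpSet X μ))
    (hg : AEStronglyMeasurable g μ) (hgC : ∀ᵐ ω ∂μ, |g ω| ≤ C) :
    HasDerivAt (fun s ↦ ∫ ω, g ω ∂μ.tilted (s * X ·)) (cov[g, X; μ.tilted (t * X ·)]) t := by
  rcases eq_zero_or_neZero μ with rfl | _
  · simpa using hasDerivAt_const t (0 : ℝ)
  have exp_int : Integrable (fun ω ↦ Real.exp (t * X ω)) μ :=
    integrable_of_mem_integrableExpSet (interior_subset ht)
  have := isProbabilityMeasure_tilted exp_int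
  have mgf_ne : mgf X μ t ≠ 0 := (integral_exp_pos exp_int).ne'
  have hac : μ.tilted (t * X ·) ≪ μ := tilted_absolutelyContinuous _ _
  have hg2 : MemLp g 2 (μ.tilted (t * X ·)) := .of_bound (hg.mono_ac hac) C (hac.ae_le hgC)
  simp_rw [integral_tilted_mul_eq_div]
  refine ((hasDerivAt_integral_mul_exp ht hg hgC).div (hasDerivAt_mgf ht) mgf_ne).congr_deriv ?_
  rw [covariance_eq_sub hg2 (memLp_tilted_mul ht 2)]
  simp only [integral_tilted_mul_eq_div, Pi.mul_apply, mul_assoc]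
  field_simp
  simp only [mul_comm _ t]
  ring

end ExponentialFamily

section RisingFactorial

lemma risingFactorial_eq_ascPochhammer_eval (y : ℝ) (n : ℕ) :
    risingFactorial y n = (ascPochhammer ℝ n).eval y := by
  induction n with
  | zero => simp [risingFactorial]
  | succ n ih => rw [risingFactorial, ascPochhammer_succ_eval, ih]

lemma risingFactorial_succ_left (y : ℝ) (n : ℕ) :
    risingFactorial y (n + 1) = y * risingFactorial (y + 1) n := by
  simp [risingFactorial_eq_ascPochhammer_eval, ascPochhammer_succ_left]

lemma risingFactorial_ne_zero {y : ℝ} (hy : ∀ n : ℕ, y + n ≠ 0) (n : ℕ) :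
    risingFactorial y n ≠ 0 := by
  induction n with
  | zero => exact one_ne_zero
  | succ n ih => exact mul_ne_zero ih (hy n)

lemma Gamma_add_natCast {p : ℝ} (hp : 0 < p) (n : ℕ) :
    Real.Gamma (p + n) = risingFactorial p n * Real.Gamma p := by
  induction n with
  | zero => simp [risingFactorial]
  | succ n ih =>
    rw [Nat.cast_succ, ← add_assoc, Real.Gamma_add_one (by positivity), ih, risingFactorial]
    ring

lemma choose_add_sub_one_eq_risingFactorial_div_factorial (b : ℝ) (n : ℕ) :
    Ring.choose (b + n - 1) n = risingFactorial b n / n.factorial := by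
  rw [← Ring.multichoose_eq, eq_div_iff (by positivity), risingFactorial_eq_ascPochhammer_eval,
    ← Polynomial.ascPochhammer_smeval_eq_eval,
    ← Ring.factorial_nsmul_multichoose_eq_ascPochhammer, nsmul_eq_mul, mul_comm]

lemma hasSum_risingFactorial_div_factorial_mul_pow (b : ℝ) {y : ℝ} (hy : |y| < 1) :
    HasSum (fun j : ℕ ↦ risingFactorial b j / j.factorial * y ^ j) ((1 - y) ^ (-b)) := by
  have h := (Real.one_div_one_sub_rpow_hasFPowerSeriesOnBall_zero b).hasSum (y := y)
    (by simpa [enorm_eq_nnnorm, ← NNReal.coe_lt_coe] using hy)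
  rw [Real.rpow_neg (by linarith [abs_lt.1 hy])]
  simpa [choose_add_sub_one_eq_risingFactorial_div_factorial,
    FormalMultilinearSeries.ofScalars_apply_eq, mul_comm] using h

end RisingFactorial

section Contiguous

/-- The `j`-th term `(a)_j (b)_j / ((c)_j j!) xʲ` of the series `hypF a b c x`, named so that the
convergence of the series can be stated. -/
noncomputable def hypFTerm (a b c x : ℝ) (j : ℕ) : ℝ :=
  risingFactorial a j * risingFactorial b j / (risingFactorial c j * j.factorial) * x ^ j

lemma hypFTerm_zero (a b c x : ℝ) : hypFTerm a b c x 0 = 1 := by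
  simp [hypFTerm, risingFactorial]

lemma hypFTerm_succ_eq_add (a b x : ℝ) {c : ℝ} (hc : ∀ n : ℕ, c + n ≠ 0) (j : ℕ) :
    hypFTerm a b c x (j + 1) = hypFTerm a b (c + 1) x (j + 1) +
      a * b * x / (c * (c + 1)) * hypFTerm (a + 1) (b + 1) (c + 2) x j := by
  have hc_zero : c ≠ 0 := by simpa using hc 0
  have hc_succ (n : ℕ) : c + 1 + n ≠ 0 := by
    simpa [add_assoc, add_comm, add_left_comm] using hc (n + 1)
  have hc_one : c + 1 ≠ 0 := by simpa using hc_succ 0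
  have hc_succ_j := hc_succ j
  have rising_ne : risingFactorial (c + 1) j ≠ 0 := risingFactorial_ne_zero hc_succ j
  have rising_succ : risingFactorial (c + 1) (j + 1) = risingFactorial (c + 1) j * (c + 1 + j) :=
    rfl
  have rising_add_two :
      risingFactorial (c + 2) j = risingFactorial (c + 1) j * (c + 1 + j) / (c + 1) := by
    rw [← rising_succ, risingFactorial_succ_left, mul_div_cancel_left₀ _ hc_one, add_assoc,
      one_add_one_eq_two]
  simp only [hypFTerm, risingFactorial_succ_left a, risingFactorial_succ_left b,
    risingFactorial_succ_left c, rising_succ, rising_add_two, Nat.factorial_succ]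
  push_cast
  field_simp
  ring

theorem hypF_eq_add_of_summable {a b c x : ℝ} (hc : ∀ n : ℕ, c + n ≠ 0)
    (h₁ : Summable (hypFTerm a b (c + 1) x))
    (h₂ : Summable (hypFTerm (a + 1) (b + 1) (c + 2) x)) :
    hypF a b c x = hypF a b (c + 1) x +
      a * b * x / (c * (c + 1)) * hypF (a + 1) (b + 1) (c + 2) x := by
  have tail_succ : HasSum (fun j ↦ hypFTerm a b (c + 1) x (j + 1)) (hypF a b (c + 1) x - 1) := by
    rw [hasSum_nat_add_iff 1, Finset.sum_range_one, hypFTerm_zero, sub_add_cancel]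
    exact h₁.hasSum
  have tail : HasSum (fun j ↦ hypFTerm a b c x (j + 1)) (hypF a b (c + 1) x - 1 +
      a * b * x / (c * (c + 1)) * hypF (a + 1) (b + 1) (c + 2) x) := by
    simp_rw [hypFTerm_succ_eq_add a b x hc]
    exact tail_succ.add (h₂.hasSum.mul_left _)
  refine ((hasSum_nat_add_iff 1).1 tail).tsum_eq.trans ?_
  rw [Finset.sum_range_one, hypFTerm_zero]
  ring

end Contiguous

section BetaMeasure

variable {p q : ℝ}

lemma measurable_betaPDF (p q : ℝ) : Measurable (betaPDF p q) :=
  (measurable_betaPDFReal p q).ennreal_ofReal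

lemma ae_mem_Ioo_betaMeasure (p q : ℝ) : ∀ᵐ t ∂betaMeasure p q, t ∈ Ioo (0 : ℝ) 1 := by
  rw [betaMeasure, ae_withDensity_iff (measurable_betaPDF p q)]
  refine .of_forall fun t ht ↦ ?_
  by_contra! h
  exact ht (by rw [betaPDF, betaPDFReal, if_neg (mem_Ioo.not.1 h), ENNReal.ofReal_zero])

lemma betaPDFReal_nonneg (hp : 0 < p) (hq : 0 < q) (t : ℝ) : 0 ≤ betaPDFReal p q t := by
  by_cases ht : 0 < t ∧ t < 1
  · exact (betaPDFReal_pos ht.1 ht.2 hp hq).le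
  · rw [betaPDFReal, if_neg ht]

lemma rpow_mul_rpow_mul_betaPDFReal {u v : ℝ} (hpu : 0 < p + u) (hqv : 0 < q + v) (t : ℝ) :
    t ^ u * (1 - t) ^ v * betaPDFReal p q t =
      beta (p + u) (q + v) / beta p q * betaPDFReal (p + u) (q + v) t := by
  have beta_ne : beta (p + u) (q + v) ≠ 0 := (beta_pos hpu hqv).ne'
  by_cases ht : 0 < t ∧ t < 1
  · rw [betaPDFReal, betaPDFReal, if_pos ht, if_pos ht, add_sub_right_comm p, add_sub_right_comm q,
      Real.rpow_add ht.1, Real.rpow_add (sub_pos.2 ht.2)]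
    field_simp
  · simp only [betaPDFReal, if_neg ht, mul_zero]

lemma integral_betaMeasure (hp : 0 < p) (hq : 0 < q) (f : ℝ → ℝ) :
    ∫ t, f t ∂betaMeasure p q = ∫ t, betaPDFReal p q t * f t := by
  rw [betaMeasure, integral_withDensity_eq_integral_toReal_smul
    (measurable_betaPDF p q) (.of_forall fun _ ↦ ENNReal.ofReal_lt_top)]
  simp only [betaPDF, ENNReal.toReal_ofReal (betaPDFReal_nonneg hp hq _), smul_eq_mul]

lemma integral_rpow_mul_rpow_mul_betaMeasure {u v : ℝ} (hp : 0 < p) (hq : 0 < q)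
    (hpu : 0 < p + u) (hqv : 0 < q + v) (f : ℝ → ℝ) :
    ∫ t, t ^ u * (1 - t) ^ v * f t ∂betaMeasure p q =
      beta (p + u) (q + v) / beta p q * ∫ t, f t ∂betaMeasure (p + u) (q + v) := by
  rw [integral_betaMeasure hp hq, integral_betaMeasure hpu hqv, ← integral_const_mul]
  congr with t
  rw [mul_left_comm, ← mul_assoc, ← mul_assoc, ← rpow_mul_rpow_mul_betaPDFReal hpu hqv]

lemma beta_add_natCast_left (hp : 0 < p) (hq : 0 < q) (n : ℕ) :
    beta (p + n) q / beta p q = risingFactorial p n / risingFactorial (p + q) n := by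
  have := (Real.Gamma_pos_of_pos hp).ne'
  have := (Real.Gamma_pos_of_pos hq).ne'
  have := (Real.Gamma_pos_of_pos (add_pos hp hq)).ne'
  rw [beta, beta, add_right_comm, Gamma_add_natCast hp, Gamma_add_natCast (add_pos hp hq)]
  field_simp

lemma integral_pow_mul_betaMeasure (hp : 0 < p) (hq : 0 < q) (n : ℕ) (f : ℝ → ℝ) :
    ∫ t, t ^ n * f t ∂betaMeasure p q =
      risingFactorial p n / risingFactorial (p + q) n * ∫ t, f t ∂betaMeasure (p + n) q := by
  have h := integral_rpow_mul_rpow_mul_betaMeasure (u := n) (v := 0) hp hq (by positivity)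
    (by simpa) f
  simpa [beta_add_natCast_left hp hq] using h

lemma integral_pow_betaMeasure (hp : 0 < p) (hq : 0 < q) (n : ℕ) :
    ∫ t, t ^ n ∂betaMeasure p q = risingFactorial p n / risingFactorial (p + q) n := by
  have := isProbabilityMeasureBeta (α := p + n) (by positivity) hq
  simpa using integral_pow_mul_betaMeasure hp hq n fun _ ↦ 1

end BetaMeasure

section EulerIntegral

variable {a b c x t : ℝ}

lemma abs_mul_lt_one (hx : |x| < 1) (ht : t ∈ Icc (0 : ℝ) 1) : |x * t| < 1 := by
  rw [abs_mul, abs_of_nonneg ht.1]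
  exact (mul_le_of_le_one_right (abs_nonneg x) ht.2).trans_lt hx

lemma one_sub_mul_pos (hx : |x| < 1) (ht : t ∈ Icc (0 : ℝ) 1) : 0 < 1 - x * t :=
  sub_pos.2 (lt_of_abs_lt (abs_mul_lt_one hx ht))

theorem hasSum_hypFTerm (ha : 0 < a) (hac : a < c) (hx : |x| < 1) :
    HasSum (hypFTerm a b c x) (∫ t, (1 - x * t) ^ (-b) ∂betaMeasure a (c - a)) := by
  have hca : 0 < c - a := sub_pos.2 hac
  have := isProbabilityMeasureBeta ha hca
  have term_eq (j : ℕ) : hypFTerm a b c x j =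
      ∫ t, risingFactorial b j / j.factorial * (x * t) ^ j ∂betaMeasure a (c - a) := by
    simp_rw [mul_pow, ← mul_assoc]
    rw [integral_const_mul, integral_pow_betaMeasure ha hca, add_sub_cancel, hypFTerm]
    ring
  rw [funext term_eq]
  refine hasSum_integral_of_dominated_convergence
    (fun j _ ↦ |risingFactorial b j / j.factorial * x ^ j|) (fun j ↦ by fun_prop) (fun j ↦ ?_)
    (.of_forall fun _ ↦ (hasSum_risingFactorial_div_factorial_mul_pow b hx).summable.abs)
    (integrable_const _) ?_
  · filter_upwards [ae_mem_Ioo_betaMeasure a (c - a)] with t ht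
    rw [mul_pow, ← mul_assoc, Real.norm_eq_abs, abs_mul, abs_of_nonneg (pow_nonneg ht.1.le j)]
    exact mul_le_of_le_one_right (abs_nonneg _) (pow_le_one₀ ht.1.le ht.2.le)
  · filter_upwards [ae_mem_Ioo_betaMeasure a (c - a)] with t ht
    exact hasSum_risingFactorial_div_factorial_mul_pow b
      (abs_mul_lt_one hx (Ioo_subset_Icc_self ht))

theorem hypF_eq_integral (ha : 0 < a) (hac : a < c) (hx : |x| < 1) :
    hypF a b c x = ∫ t, (1 - x * t) ^ (-b) ∂betaMeasure a (c - a) :=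
  (hasSum_hypFTerm ha hac hx).tsum_eq

end EulerIntegral

section Logit

/-- The log-odds `log (t / (1 - t))`, the sufficient statistic of the beta family along
`p + q = const`. Meaningful for `t ∈ (0, 1)` only. -/
noncomputable def logit (t : ℝ) : ℝ := Real.log t - Real.log (1 - t)

@[fun_prop]
lemma measurable_logit : Measurable logit :=
  Real.measurable_log.sub (Real.measurable_log.comp (measurable_const.sub measurable_id))

lemma strictMonoOn_logit : StrictMonoOn logit (Ioo 0 1) := fun _ hs _ ht hst ↦
  sub_lt_sub (Real.log_lt_log hs.1 hst)
    (Real.log_lt_log (sub_pos.2 ht.2) (sub_lt_sub_left hst 1))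

lemma exp_mul_logit {t : ℝ} (ht : t ∈ Ioo (0 : ℝ) 1) (u : ℝ) :
    Real.exp (u * logit t) = t ^ u * (1 - t) ^ (-u) := by
  rw [Real.rpow_def_of_pos ht.1, Real.rpow_def_of_pos (sub_pos.2 ht.2), ← Real.exp_add, logit]
  ring_nf

variable {p q u : ℝ}

lemma exp_mul_logit_mul_betaPDFReal (hpu : 0 < p + u) (hqu : 0 < q - u) (t : ℝ) :
    Real.exp (u * logit t) * betaPDFReal p q t =
      beta (p + u) (q - u) / beta p q * betaPDFReal (p + u) (q - u) t := by
  by_cases ht : 0 < t ∧ t < 1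
  · rw [exp_mul_logit ht, rpow_mul_rpow_mul_betaPDFReal hpu hqu, sub_eq_add_neg]
  · simp only [betaPDFReal, if_neg ht, mul_zero]

lemma integral_exp_mul_logit_betaMeasure (hp : 0 < p) (hq : 0 < q)
    (hpu : 0 < p + u) (hqu : 0 < q - u) :
    ∫ t, Real.exp (u * logit t) ∂betaMeasure p q = beta (p + u) (q - u) / beta p q := by
  rw [sub_eq_add_neg] at hqu ⊢
  have := isProbabilityMeasureBeta hpu hqu
  rw [integral_congr_ae ((ae_mem_Ioo_betaMeasure p q).mono fun t ht ↦ exp_mul_logit ht u)]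
  simpa using integral_rpow_mul_rpow_mul_betaMeasure hp hq hpu hqu fun _ ↦ 1

lemma integrable_exp_mul_logit_betaMeasure (hp : 0 < p) (hq : 0 < q)
    (hpu : 0 < p + u) (hqu : 0 < q - u) :
    Integrable (fun t ↦ Real.exp (u * logit t)) (betaMeasure p q) := by
  refine .of_integral_ne_zero ?_
  rw [integral_exp_mul_logit_betaMeasure hp hq hpu hqu]
  exact (div_pos (beta_pos hpu hqu) (beta_pos hp hq)).ne'

theorem betaMeasure_tilted_mul_logit (hp : 0 < p) (hq : 0 < q)
    (hpu : 0 < p + u) (hqu : 0 < q - u) :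
    (betaMeasure p q).tilted (u * logit ·) = betaMeasure (p + u) (q - u) := by
  rw [Measure.tilted, integral_exp_mul_logit_betaMeasure hp hq hpu hqu, betaMeasure,
    ← withDensity_mul _ (measurable_betaPDF p q) (by fun_prop), betaMeasure]
  congr with t
  have : beta p q ≠ 0 := (beta_pos hp hq).ne'
  have : beta (p + u) (q - u) ≠ 0 := (beta_pos hpu hqu).ne'
  rw [Pi.mul_apply, betaPDF, betaPDF, ← ENNReal.ofReal_mul (betaPDFReal_nonneg hp hq t),
    mul_div_assoc', mul_comm, exp_mul_logit_mul_betaPDFReal hpu hqu]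
  field_simp

end Logit

section EulerMeasure

/-- The probability measure on `(0, 1)` whose density is the normalised integrand
`t ^ (a - 1) * (1 - t) ^ (c - a - 1) * (1 - x * t) ^ (-b)` of Euler's integral for `hypF a b c x`,
encoded as an exponential tilt of the beta distribution. -/
noncomputable def eulerMeasure (a b c x : ℝ) : Measure ℝ :=
  (betaMeasure a (c - a)).tilted fun t ↦ -b * Real.log (1 - x * t)

variable {a b c x : ℝ}

instance : NullSingletonClass (eulerMeasure a b c x) := by
  unfold eulerMeasure Measure.tilted betaMeasure
  infer_instance

lemma ae_mem_Ioo_eulerMeasure (a b c x : ℝ) : ∀ᵐ t ∂eulerMeasure a b c x, t ∈ Ioo (0 : ℝ) 1 :=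
  (tilted_absolutelyContinuous _ _).ae_le (ae_mem_Ioo_betaMeasure a (c - a))

lemma exists_ae_abs_le_of_continuousOn_Icc {μ : Measure ℝ} (hμ : ∀ᵐ t ∂μ, t ∈ Ioo (0 : ℝ) 1)
    {f : ℝ → ℝ} (hf : ContinuousOn f (Icc 0 1)) : ∃ C, ∀ᵐ t ∂μ, |f t| ≤ C := by
  obtain ⟨C, hC⟩ := isCompact_Icc.exists_bound_of_continuousOn hf
  exact ⟨C, hμ.mono fun t ht ↦ hC t (Ioo_subset_Icc_self ht)⟩

lemma exists_ae_abs_exp_neg_mul_log_le (b : ℝ) (hx : |x| < 1) (p q : ℝ) :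
    ∃ C, ∀ᵐ t ∂betaMeasure p q, |Real.exp (-b * Real.log (1 - x * t))| ≤ C :=
  exists_ae_abs_le_of_continuousOn_Icc (ae_mem_Ioo_betaMeasure p q) <|
    ((ContinuousOn.log (by fun_prop) fun _ ht ↦ (one_sub_mul_pos hx ht).ne').const_mul _).rexp

lemma integrable_exp_neg_mul_log_betaMeasure (b : ℝ) (ha : 0 < a) (hac : a < c) (hx : |x| < 1) :
    Integrable (fun t ↦ Real.exp (-b * Real.log (1 - x * t))) (betaMeasure a (c - a)) := by
  have := isProbabilityMeasureBeta ha (sub_pos.2 hac)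
  obtain ⟨C, hC⟩ := exists_ae_abs_exp_neg_mul_log_le b hx a (c - a)
  exact .of_bound (Measurable.aestronglyMeasurable (by fun_prop)) C hC

lemma isProbabilityMeasure_eulerMeasure (b : ℝ) (ha : 0 < a) (hac : a < c) (hx : |x| < 1) :
    IsProbabilityMeasure (eulerMeasure a b c x) := by
  have := isProbabilityMeasureBeta ha (sub_pos.2 hac)
  exact isProbabilityMeasure_tilted (integrable_exp_neg_mul_log_betaMeasure b ha hac hx)

lemma ae_exp_neg_mul_log_eq_rpow (b : ℝ) (hx : |x| < 1) (p q : ℝ) :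
    ∀ᵐ t ∂betaMeasure p q, Real.exp (-b * Real.log (1 - x * t)) = (1 - x * t) ^ (-b) := by
  filter_upwards [ae_mem_Ioo_betaMeasure p q] with t ht
  rw [Real.rpow_def_of_pos (one_sub_mul_pos hx (Ioo_subset_Icc_self ht)), mul_comm]

lemma hypF_eq_integral_exp (ha : 0 < a) (hac : a < c) (hx : |x| < 1) :
    hypF a b c x = ∫ t, Real.exp (-b * Real.log (1 - x * t)) ∂betaMeasure a (c - a) := by
  rw [hypF_eq_integral ha hac hx, integral_congr_ae (ae_exp_neg_mul_log_eq_rpow b hx a (c - a))]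

lemma hypF_pos (ha : 0 < a) (hac : a < c) (hx : |x| < 1) : 0 < hypF a b c x := by
  have := isProbabilityMeasureBeta ha (sub_pos.2 hac)
  rw [hypF_eq_integral_exp ha hac hx]
  exact integral_exp_pos (integrable_exp_neg_mul_log_betaMeasure b ha hac hx)

lemma integral_eulerMeasure (ha : 0 < a) (hac : a < c) (hx : |x| < 1) (f : ℝ → ℝ) :
    ∫ t, f t ∂eulerMeasure a b c x =
      (∫ t, (1 - x * t) ^ (-b) * f t ∂betaMeasure a (c - a)) / hypF a b c x := by
  rw [eulerMeasure, integral_tilted, ← hypF_eq_integral_exp ha hac hx, ← integral_div]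
  refine integral_congr_ae ((ae_exp_neg_mul_log_eq_rpow b hx a (c - a)).mono fun t ht ↦ ?_)
  simp only [ht, smul_eq_mul]
  ring

lemma eulerMeasure_tilted_mul_logit {u : ℝ} (ha : 0 < a) (hac : a < c) (hx : |x| < 1)
    (hau : 0 < a + u) (huc : a + u < c) :
    (eulerMeasure a b c x).tilted (u * logit ·) = eulerMeasure (a + u) b c x := by
  have hcau : 0 < c - a - u := by linarith
  rw [eulerMeasure, tilted_comm (integrable_exp_neg_mul_log_betaMeasure b ha hac hx)
    (integrable_exp_mul_logit_betaMeasure ha (sub_pos.2 hac) hau hcau),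
    betaMeasure_tilted_mul_logit ha (sub_pos.2 hac) hau hcau, sub_sub, eulerMeasure]

lemma integrable_exp_mul_logit_eulerMeasure {u : ℝ} (ha : 0 < a) (hac : a < c) (hx : |x| < 1)
    (hau : 0 < a + u) (huc : a + u < c) :
    Integrable (fun t ↦ Real.exp (u * logit t)) (eulerMeasure a b c x) := by
  obtain ⟨C, hC⟩ := exists_ae_abs_exp_neg_mul_log_le b hx a (c - a)
  rw [eulerMeasure, integrable_tilted_iff (integrable_exp_neg_mul_log_betaMeasure b ha hac hx)]
  exact (integrable_exp_mul_logit_betaMeasure ha (sub_pos.2 hac) hau (by linarith)).bdd_mul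
    (Measurable.aestronglyMeasurable (by fun_prop)) hC

lemma zero_mem_interior_integrableExpSet_logit (ha : 0 < a) (hac : a < c) (hx : |x| < 1) :
    0 ∈ interior (integrableExpSet logit (eulerMeasure a b c x)) :=
  mem_interior.2 ⟨Ioo (-a) (c - a), fun _ hu ↦ integrable_exp_mul_logit_eulerMeasure ha hac hx
    (by linarith [hu.1]) (by linarith [hu.2]), isOpen_Ioo, neg_lt_zero.2 ha, sub_pos.2 hac⟩

lemma memLp_logit_eulerMeasure (ha : 0 < a) (hac : a < c) (hx : |x| < 1) :
    MemLp logit 2 (eulerMeasure a b c x) := by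
  have := isProbabilityMeasure_eulerMeasure b ha hac hx
  simpa using memLp_tilted_mul
    (zero_mem_interior_integrableExpSet_logit (b := b) ha hac hx) 2

theorem hasDerivAt_integral_eulerMeasure {f : ℝ → ℝ} {C : ℝ} (ha : 0 < a) (hac : a < c)
    (hx : |x| < 1) (hf : AEStronglyMeasurable f (eulerMeasure a b c x))
    (hfC : ∀ᵐ t ∂eulerMeasure a b c x, |f t| ≤ C) :
    HasDerivAt (fun a' ↦ ∫ t, f t ∂eulerMeasure a' b c x)
      (cov[f, logit; eulerMeasure a b c x]) a := by
  have := isProbabilityMeasure_eulerMeasure b ha hac hx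
  have deriv_tilted := hasDerivAt_integral_tilted
    (zero_mem_interior_integrableExpSet_logit ha hac hx) hf hfC
  simp only [zero_mul, tilted_const] at deriv_tilted
  rw [← sub_self a] at deriv_tilted
  refine (deriv_tilted.comp_sub_const a a).congr_of_eventuallyEq ?_
  filter_upwards [Ioo_mem_nhds ha hac] with a' ha'
  rw [eulerMeasure_tilted_mul_logit ha hac hx (by linarith [ha'.1]) (by linarith [ha'.2]),
    add_sub_cancel]

end EulerMeasure

section Ratio

variable {a b c x : ℝ}

lemma continuousOn_div_one_sub_mul (hx : |x| < 1) :
    ContinuousOn (fun t ↦ t / (1 - x * t)) (Icc 0 1) :=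
  continuousOn_id.div (by fun_prop) fun _ ht ↦ (one_sub_mul_pos hx ht).ne'

lemma strictMonoOn_div_one_sub_mul (hx : |x| < 1) :
    StrictMonoOn (fun t ↦ t / (1 - x * t)) (Icc 0 1) := fun s hs t ht hst ↦ by
  rw [div_lt_div_iff₀ (one_sub_mul_pos hx hs) (one_sub_mul_pos hx ht)]
  linarith

lemma integral_div_one_sub_mul_eulerMeasure (ha : 0 < a) (hac : a < c) (hx : |x| < 1) :
    ∫ t, t / (1 - x * t) ∂eulerMeasure a b c x =
      a / c * hypF (a + 1) (b + 1) (c + 1) x / hypF a b c x := by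
  rw [integral_eulerMeasure ha hac hx,
    hypF_eq_integral (add_pos ha one_pos) (add_lt_add_left hac 1) hx]
  congr 1
  have shift := integral_pow_mul_betaMeasure ha (sub_pos.2 hac) 1 fun t ↦ (1 - x * t) ^ (-(b + 1))
  simp only [risingFactorial, Nat.cast_zero, Nat.cast_one, add_zero, one_mul, add_sub_cancel,
    pow_one] at shift
  rw [add_sub_add_right_eq_sub, ← shift]
  refine integral_congr_ae ((ae_mem_Ioo_betaMeasure a (c - a)).mono fun t ht ↦ ?_)
  have base_pos := one_sub_mul_pos hx (Ioo_subset_Icc_self ht)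
  simp only [neg_add, ← sub_eq_add_neg, Real.rpow_sub_one base_pos.ne']
  ring

theorem hypF_div_hypF_add_one (ha : 0 < a) (hac : a < c + 1) (hc : c ≠ 0) (hx : |x| < 1) :
    hypF a b c x / hypF a b (c + 1) x =
      1 + b * x / c * ∫ t, t / (1 - x * t) ∂eulerMeasure a b (c + 1) x := by
  have hc_add (n : ℕ) : c + n ≠ 0 := by
    cases n with
    | zero => simpa using hc
    | succ n =>
      push_cast
      have : (0 : ℝ) ≤ n := n.cast_nonneg
      linarith
  have hac' : a + 1 < c + 2 := by linarith
  have hc1 : c + 1 ≠ 0 := by linarith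
  have hF : hypF a b (c + 1) x ≠ 0 := (hypF_pos ha hac hx).ne'
  rw [integral_div_one_sub_mul_eulerMeasure ha hac hx, hypF_eq_add_of_summable hc_add
    (hasSum_hypFTerm ha hac hx).summable (hasSum_hypFTerm (add_pos ha one_pos) hac' hx).summable,
    add_assoc c, one_add_one_eq_two]
  field_simp

theorem hasDerivAt_hypF_div_hypF_add_one (ha : 0 < a) (hac : a < c + 1) (hc : c ≠ 0)
    (hx : |x| < 1) :
    HasDerivAt (fun a' ↦ hypF a' b c x / hypF a' b (c + 1) x)
      (b * x / c * cov[fun t ↦ t / (1 - x * t), logit; eulerMeasure a b (c + 1) x]) a := by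
  obtain ⟨C, hC⟩ := exists_ae_abs_le_of_continuousOn_Icc
    (ae_mem_Ioo_eulerMeasure a b (c + 1) x) (continuousOn_div_one_sub_mul hx)
  have deriv_mean := hasDerivAt_integral_eulerMeasure ha hac hx
    (Measurable.aestronglyMeasurable (by fun_prop)) hC
  refine ((deriv_mean.const_mul (b * x / c)).const_add 1).congr_of_eventuallyEq ?_
  filter_upwards [Ioo_mem_nhds ha hac] with a' ha'
  exact hypF_div_hypF_add_one ha'.1 ha'.2 hc hx

theorem covariance_div_one_sub_mul_logit_pos (ha : 0 < a) (hac : a < c) (hx : |x| < 1) :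
    0 < cov[fun t ↦ t / (1 - x * t), logit; eulerMeasure a b c x] := by
  have := isProbabilityMeasure_eulerMeasure b ha hac hx
  have supp := ae_mem_Ioo_eulerMeasure a b c x
  obtain ⟨C, hC⟩ := exists_ae_abs_le_of_continuousOn_Icc supp (continuousOn_div_one_sub_mul hx)
  exact covariance_pos_of_strictMonoOn supp
    ((strictMonoOn_div_one_sub_mul hx).mono Ioo_subset_Icc_self) strictMonoOn_logit
    (.of_bound (Measurable.aestronglyMeasurable (by fun_prop)) C hC)
    (memLp_logit_eulerMeasure ha hac hx)

end Ratio

lemma sign_mul_of_pos_right {r s : ℝ} (hs : 0 < s) : Real.sign (r * s) = Real.sign r := by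
  rcases lt_trichotomy r 0 with hr | rfl | hr
  · rw [Real.sign_of_neg hr, Real.sign_of_neg (mul_neg_of_neg_of_pos hr hs)]
  · rw [zero_mul]
  · rw [Real.sign_of_pos hr, Real.sign_of_pos (mul_pos hr hs)]

theorem stmt15_general (a b c x : ℝ) (ha : 0 < a) (hac : a < c + 1) (hc : c ≠ 0) (hx : |x| < 1) :
    Real.sign (deriv (fun a' ↦ hypF a' b c x / hypF a' b (c + 1) x) a) =
      Real.sign (b * (x / c)) := by
  rw [(hasDerivAt_hypF_div_hypF_add_one ha hac hc hx).deriv, mul_div_assoc]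
  exact sign_mul_of_pos_right (covariance_div_one_sub_mul_logit_pos ha hac hx)

/-- For `c > a > 0` and `0 < x < 1`,
`sgn(D_a (F(a,b,c,x)/F(a,b,c+1,x))) = sgn(b)`. -/
theorem stmt15 (a b c x : ℝ) (ha : 0 < a) (hac : a < c)
    (hx : x ∈ Set.Ioo (0 : ℝ) 1) :
    Real.sign (deriv (fun a' : ℝ => hypF a' b c x / hypF a' b (c + 1) x) a) =
      Real.sign b := by
  have hc : 0 < c := ha.trans hac
  rw [stmt15_general a b c x ha (by linarith) hc.ne' ((abs_of_pos hx.1).trans_lt hx.2)]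
  exact sign_mul_of_pos_right (div_pos hx.1 hc)
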